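/- For |q|<1, ∑_{n≥1} (n/5)·q^n/(1-q^n)^2 = q·(q^5;q^5)_∞^5/(q;q)_∞, where (n/5) is the Legendre symbol. -/

import Mathlib

open scoped BigOperators

instance : Fact (Nat.Prime 5) := ⟨by norm_num⟩

/-!
Put `p = q⁵` and `θ(x) = (x; p)_∞ (p / x; p)_∞`. Grouping the series by residues mod `5` turns
it into `E(q) - E(q²)`, where `E(x) = ∑_{n ∈ ℤ} x pⁿ / (1 - x pⁿ)²` is, up to an additive constant,
the Weierstrass function `℘` in the multiplicative variable `x`. The addition formula
`℘(x) - ℘(y) = -σ(x + y) σ(x - y) / (σ(x)² σ(y)²)` becomes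
`E(x) - E(y) = (p; p)_∞⁴ x θ(x y) θ(y / x) / (θ(x)² θ(y)²)`. At `x = q`, `y = q²` the symmetry
`θ(p / x) = θ(x)` reduces the right-hand side to `q (p; p)_∞⁴ / (θ(q) θ(q²))`, and
`(q; q)_∞ = θ(q) θ(q²) (p; p)_∞`.

The addition formula is Liouville's theorem on `ℂˣ / pᶻ`: as functions of `x`, both sides have the
same double pole at `x = 1`, so their difference is holomorphic and `p`-periodic, hence constant by
the maximum principle, and it vanishes at `x = y`.
-/

open Filter Metric Set Topology

section Liouville

variable {E F : Type*} [NormedAddCommGroup E] [NormedAddCommGroup F] [NormedSpace ℂ F]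
  [StrictConvexSpace ℝ F]

lemma eq_of_differentiableOn_of_image_subset_image_compact [NormedSpace ℂ E] {f : E → F}
    {U K : Set E} (hUo : IsOpen U) (hU : IsPreconnected U) (hK : IsCompact K) (hKU : K ⊆ U)
    (hf : DifferentiableOn ℂ f U) (hfK : f '' U ⊆ f '' K) {x y : E} (hx : x ∈ U) (hy : y ∈ U) :
    f x = f y := by
  obtain ⟨w, hwK, -⟩ := hfK (mem_image_of_mem f hx)
  obtain ⟨c, hcK, hc⟩ := hK.exists_isMaxOn ⟨w, hwK⟩ (hf.continuousOn.mono hKU).norm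
  have hmax : IsMaxOn (norm ∘ f) U c := fun z hz ↦ by
    obtain ⟨w, hwK, hw⟩ := hfK (mem_image_of_mem f hz)
    simpa [← hw] using hc hwK
  have hconst := Complex.eqOn_of_isPreconnected_of_isMaxOn_norm hU hUo hf (hKU hcK) hmax
  exact (hconst hx).trans (hconst hy).symm

lemma isPreconnected_norm_preimage [NormedSpace ℝ E] (hE : 1 < Module.rank ℝ E) {s : Set ℝ}
    (hs : s.OrdConnected) : IsPreconnected ((‖·‖) ⁻¹' s : Set E) := by
  have himage : ((‖·‖) ⁻¹' s : Set E) =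
      (fun a : ℝ × E ↦ a.1 • a.2) '' ((s ∩ Ici 0) ×ˢ sphere (0 : E) 1) := by
    ext x
    constructor
    · intro hx
      rcases eq_or_ne x 0 with rfl | hx0
      · obtain ⟨u, hu⟩ := (isConnected_sphere hE (0 : E) zero_le_one).nonempty
        exact ⟨(0, u), ⟨⟨by simpa using hx, self_mem_Ici⟩, hu⟩, zero_smul ℝ u⟩
      · have hx0' : ‖x‖ ≠ 0 := norm_ne_zero_iff.mpr hx0
        exact ⟨(‖x‖, ‖x‖⁻¹ • x), ⟨⟨hx, norm_nonneg x⟩, by simp [norm_smul, hx0']⟩,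
          smul_inv_smul₀ hx0' x⟩
    · rintro ⟨⟨r, u⟩, ⟨⟨hrs, hr0⟩, hu⟩, rfl⟩
      have hnorm : ‖r • u‖ = r := by
        rw [norm_smul, mem_sphere_zero_iff_norm.mp hu, mul_one, Real.norm_of_nonneg hr0]
      rwa [mem_preimage, hnorm]
  rw [himage]
  exact ((hs.inter ordConnected_Ici).isPreconnected.prod (isPreconnected_sphere hE 0 1)).image _
    continuous_smul.continuousOn

end Liouville

lemma ne_one_of_norm_lt_one {u : ℂ} (hu : ‖u‖ < 1) : u ≠ 1 := by
  rintro rfl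
  simp at hu

lemma norm_pow_lt_one {u : ℂ} (hu : ‖u‖ < 1) {k : ℕ} (hk : k ≠ 0) : ‖u ^ k‖ < 1 := by
  rw [norm_pow]
  exact pow_lt_one₀ (norm_nonneg u) hu hk

lemma norm_mul_pow_lt_one {p x : ℂ} (hp : ‖p‖ < 1) (hx : ‖x‖ < 1) (n : ℕ) : ‖x * p ^ n‖ < 1 := by
  rw [norm_mul, norm_pow]
  exact (mul_le_of_le_one_right (norm_nonneg _) (pow_le_one₀ (norm_nonneg _) hp.le)).trans_lt hx

/-- The open annulus `‖p‖ < ‖x‖ < ‖p‖⁻¹`, two periods wide for `x ↦ p x`. -/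
def periodAnnulus (p : ℂ) : Set ℂ := {x | ‖p‖ < ‖x‖ ∧ ‖p * x‖ < 1}

/-- The closed annulus `‖p‖ ^ (1/2) ≤ ‖x‖ ≤ ‖p‖ ^ (-1/2)`, exactly one period wide for `x ↦ p x`. -/
def fundamentalAnnulus (p : ℂ) : Set ℂ := {x | ‖p‖ ≤ ‖x‖ ^ 2 ∧ ‖p‖ * ‖x‖ ^ 2 ≤ 1}

section Annulus

variable {p x y : ℂ}

lemma one_mem_periodAnnulus (hp : ‖p‖ < 1) : 1 ∈ periodAnnulus p := by
  simp [periodAnnulus, hp]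

lemma pow_mem_periodAnnulus_pow {q : ℂ} (hq0 : q ≠ 0) (hq : ‖q‖ < 1) {k m : ℕ} (hkm : k < m) :
    q ^ k ∈ periodAnnulus (q ^ m) := by
  constructor
  · rw [norm_pow, norm_pow]
    exact pow_lt_pow_right_of_lt_one₀ (norm_pos_iff.mpr hq0) hq hkm
  · rw [← pow_add]
    exact norm_pow_lt_one hq (by lia)

lemma ne_zero_of_mem_periodAnnulus (hx : x ∈ periodAnnulus p) : x ≠ 0 :=
  norm_pos_iff.mp ((norm_nonneg p).trans_lt hx.1)

lemma norm_div_lt_one_of_mem_periodAnnulus (hx : x ∈ periodAnnulus p) : ‖p / x‖ < 1 := by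
  rw [norm_div, div_lt_one ((norm_nonneg p).trans_lt hx.1)]
  exact hx.1

lemma isOpen_periodAnnulus (p : ℂ) : IsOpen (periodAnnulus p) :=
  (isOpen_lt continuous_const continuous_norm).inter
    (isOpen_lt (continuous_const.mul continuous_id).norm continuous_const)

lemma isPreconnected_periodAnnulus (p : ℂ) : IsPreconnected (periodAnnulus p) := by
  have hs : (Ioi ‖p‖ ∩ (‖p‖ * ·) ⁻¹' Iio 1).OrdConnected :=
    ordConnected_Ioi.inter
      (ordConnected_Iio.preimage_mono (monotone_mul_left_of_nonneg (norm_nonneg p)))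
  have hrank : 1 < Module.rank ℝ ℂ := by simp [Complex.rank_real_complex]
  convert isPreconnected_norm_preimage hrank hs using 1
  ext x
  simp [periodAnnulus]

lemma fundamentalAnnulus_subset_periodAnnulus (hp0 : p ≠ 0) (hp : ‖p‖ < 1) :
    fundamentalAnnulus p ⊆ periodAnnulus p := by
  have hpos := norm_pos_iff.mpr hp0
  rintro x ⟨hlower, hupper⟩
  have hx := norm_nonneg x
  rw [periodAnnulus, mem_ofPred_eq, norm_mul]
  constructor <;> by_contra! h <;> nlinarith

lemma isCompact_fundamentalAnnulus (hp0 : p ≠ 0) (hp : ‖p‖ < 1) :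
    IsCompact (fundamentalAnnulus p) := by
  refine isCompact_of_isClosed_isBounded ?_ ?_
  · exact (isClosed_le continuous_const (continuous_norm.pow 2)).inter
      (isClosed_le (continuous_const.mul (continuous_norm.pow 2)) continuous_const)
  · refine (isBounded_closedBall (x := (0 : ℂ)) (r := 1 / ‖p‖)).subset fun x hx ↦ ?_
    rw [mem_closedBall_zero_iff, le_div_iff₀' (norm_pos_iff.mpr hp0), ← norm_mul]
    exact (fundamentalAnnulus_subset_periodAnnulus hp0 hp hx).2.le

lemma exists_mem_fundamentalAnnulus (hp0 : p ≠ 0) (hp : ‖p‖ < 1) (hx : x ∈ periodAnnulus p) :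
    ∃ w ∈ fundamentalAnnulus p, w = x ∨ w = p * x ∨ p * w = x := by
  obtain ⟨hlower, hupper⟩ := hx
  have hpos := norm_pos_iff.mpr hp0
  have hx0 := norm_nonneg x
  rw [norm_mul] at hupper
  rcases lt_or_ge (‖x‖ ^ 2) ‖p‖ with hsmall | hsmall
  · refine ⟨x / p, ⟨?_, ?_⟩, .inr (.inr (mul_div_cancel₀ x hp0))⟩ <;> rw [norm_div, div_pow]
    · rw [le_div_iff₀ (by positivity)]
      nlinarith [pow_pos hpos 2]
    · rw [mul_div_assoc', div_le_iff₀ (by positivity)]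
      nlinarith
  rcases le_or_gt (‖p‖ * ‖x‖ ^ 2) 1 with hlarge | hlarge
  · exact ⟨x, ⟨hsmall, hlarge⟩, .inl rfl⟩
  · refine ⟨p * x, ⟨?_, ?_⟩, .inr (.inl rfl)⟩ <;> rw [norm_mul] <;>
      nlinarith [mul_nonneg hpos.le hx0]

lemma eq_of_differentiableOn_of_mul_periodic {F : Type*} [NormedAddCommGroup F] [NormedSpace ℂ F]
    [StrictConvexSpace ℝ F] {f : ℂ → F} (hp0 : p ≠ 0) (hp : ‖p‖ < 1)
    (hf : DifferentiableOn ℂ f (periodAnnulus p))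
    (hper : ∀ x ∈ periodAnnulus p, p * x ∈ periodAnnulus p → f (p * x) = f x)
    (hx : x ∈ periodAnnulus p) (hy : y ∈ periodAnnulus p) : f x = f y := by
  have hsub := fundamentalAnnulus_subset_periodAnnulus hp0 hp
  refine eq_of_differentiableOn_of_image_subset_image_compact (isOpen_periodAnnulus p)
    (isPreconnected_periodAnnulus p) (isCompact_fundamentalAnnulus hp0 hp) hsub hf ?_ hx hy
  rintro _ ⟨z, hz, rfl⟩
  obtain ⟨w, hw, rfl | rfl | rfl⟩ := exists_mem_fundamentalAnnulus hp0 hp hz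
  · exact ⟨w, hw, rfl⟩
  · exact ⟨p * z, hw, hper z hz (hsub hw)⟩
  · exact ⟨w, hw, (hper w (hsub hw) hz).symm⟩

end Annulus

/-- The infinite product `(x; p)_∞`. -/
noncomputable def qPoch (p x : ℂ) : ℂ := ∏' n : ℕ, (1 - x * p ^ n)

section qPoch

variable {p x : ℂ}

lemma summable_norm_mul_pow (hp : ‖p‖ < 1) (x : ℂ) : Summable fun n : ℕ ↦ ‖-(x * p ^ n)‖ := by
  simpa using (summable_geometric_of_lt_one (norm_nonneg p) hp).mul_left ‖x‖

lemma multipliable_one_sub_mul_pow (hp : ‖p‖ < 1) (x : ℂ) :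
    Multipliable fun n : ℕ ↦ 1 - x * p ^ n := by
  simpa [sub_eq_add_neg] using multipliable_one_add_of_summable (summable_norm_mul_pow hp x)

lemma tprod_one_sub_pow_succ (p : ℂ) : ∏' n : ℕ, (1 - p ^ (n + 1)) = qPoch p p := by
  simp only [qPoch, pow_succ']

lemma qPoch_eq_one_sub_mul (hp : ‖p‖ < 1) (x : ℂ) : qPoch p x = (1 - x) * qPoch p (p * x) := by
  have hshift (n : ℕ) : x * p ^ (n + 1) = p * x * p ^ n := by ring
  rw [qPoch, tprod_eq_zero_mul' (by simpa only [hshift] using multipliable_one_sub_mul_pow hp _)]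
  simp only [pow_zero, mul_one, hshift, qPoch]

lemma qPoch_ne_zero (hp : ‖p‖ < 1) (hx : ‖x‖ < 1) : qPoch p x ≠ 0 := by
  simp only [qPoch, sub_eq_add_neg]
  refine tprod_one_add_ne_zero_of_summable (fun n ↦ ?_) (summable_norm_mul_pow hp x)
  rw [← sub_eq_add_neg, sub_ne_zero]
  exact (ne_one_of_norm_lt_one (norm_mul_pow_lt_one hp hx n)).symm

lemma differentiable_qPoch (hp : ‖p‖ < 1) : Differentiable ℂ (qPoch p) := by
  intro x
  have hbound : Summable fun n : ℕ ↦ (‖x‖ + 1) * ‖p‖ ^ n :=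
    (summable_geometric_of_lt_one (norm_nonneg p) hp).mul_left _
  have hprod := hbound.hasProdLocallyUniformlyOn_nat_one_add (f := fun n z ↦ -(z * p ^ n))
    (K := ball (0 : ℂ) (‖x‖ + 1)) isOpen_ball
    (.of_forall fun n z hz ↦ by
      rw [norm_neg, norm_mul, norm_pow]
      gcongr
      exact (mem_ball_zero_iff.mp hz).le) (fun _ ↦ by fun_prop)
  have hdiff := hprod.differentiableOn
    (.of_forall fun _ ↦ by simpa [Finset.prod_fn] using
      DifferentiableOn.finsetProd (fun _ _ ↦ by fun_prop)) isOpen_ball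
  simp only [← sub_eq_add_neg] at hdiff
  exact hdiff.differentiableAt (isOpen_ball.mem_nhds (by simp))

lemma qPoch_eq_prod_zmod (hp : ‖p‖ < 1) (x : ℂ) (N : ℕ) [NeZero N] :
    qPoch p x = ∏ j : ZMod N, qPoch (p ^ N) (x * p ^ j.val) := by
  have hpN : ‖p ^ N‖ < 1 := norm_pow_lt_one hp (NeZero.ne N)
  have hsplit (j : ZMod N) (m : ℕ) :
      1 - x * p ^ ((Nat.residueClassesEquiv N).symm (j, m)) =
        1 - x * p ^ j.val * (p ^ N) ^ m := by
    rw [Nat.residueClassesEquiv, Equiv.coe_fn_symm_mk, pow_add, pow_mul, mul_assoc]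
  have hmul : Multipliable fun c ↦ 1 - x * p ^ (Nat.residueClassesEquiv N).symm c :=
    (Nat.residueClassesEquiv N).symm.multipliable_iff.mpr (multipliable_one_sub_mul_pow hp x)
  rw [qPoch, ← (Nat.residueClassesEquiv N).symm.tprod_eq, hmul.tprod_prod', tprod_fintype]
  · simp only [hsplit, qPoch]
  · intro j
    simpa only [hsplit] using multipliable_one_sub_mul_pow hpN _

end qPoch

/-- The Koebe function `u / (1 - u)²`, with junk value `0` at its pole `u = 1`. -/
noncomputable def koebe (u : ℂ) : ℂ := u / (1 - u) ^ 2

section koebe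

lemma koebe_zero : koebe 0 = 0 := zero_div _

lemma koebe_inv (u : ℂ) : koebe u⁻¹ = koebe u := by
  rcases eq_or_ne u 0 with rfl | hu0
  · simp
  rcases eq_or_ne u 1 with rfl | hu1
  · simp
  have : u - 1 ≠ 0 := sub_ne_zero.mpr hu1
  have : 1 - u ≠ 0 := sub_ne_zero.mpr hu1.symm
  rw [koebe, koebe, ← one_div, one_sub_div hu0]
  field_simp
  ring

lemma differentiableAt_koebe {u : ℂ} (hu : u ≠ 1) : DifferentiableAt ℂ koebe u :=
  differentiableAt_id.div (by fun_prop) (pow_ne_zero 2 (sub_ne_zero.mpr hu.symm))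

lemma norm_koebe_le {u : ℂ} {r : ℝ} (hr : r < 1) (hu : ‖u‖ ≤ r) :
    ‖koebe u‖ ≤ ‖u‖ / (1 - r) ^ 2 := by
  have hdist : 1 - r ≤ ‖1 - u‖ := by
    have := norm_sub_norm_le 1 u
    rw [norm_one] at this
    linarith
  have : 0 < 1 - r := by linarith
  rw [koebe, norm_div, norm_pow]
  gcongr

lemma deriv_one_eq_zero_of_comp_inv {𝕜 F : Type*} [NontriviallyNormedField 𝕜] [NeZero (2 : 𝕜)]
    [NormedAddCommGroup F] [NormedSpace 𝕜 F] {f : 𝕜 → F} (hinv : ∀ x, f x⁻¹ = f x) :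
    deriv f 1 = 0 := by
  by_cases hf : DifferentiableAt 𝕜 f 1
  · have hcomp : HasDerivAt (fun x ↦ f x⁻¹) (-((1 : 𝕜) ^ 2)⁻¹ • deriv f 1) 1 :=
      HasDerivAt.scomp 1 (by simpa using hf.hasDerivAt) (hasDerivAt_inv one_ne_zero)
    simp only [hinv, one_pow, inv_one, neg_smul, one_smul] at hcomp
    have htwo : (2 : 𝕜) • deriv f 1 = 0 := by
      rw [two_smul]
      exact eq_neg_iff_add_eq_zero.mp (hf.hasDerivAt.unique hcomp)
    exact (smul_eq_zero.mp htwo).resolve_left two_ne_zero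
  · exact deriv_zero_of_not_differentiableAt hf

lemma exists_differentiableOn_eq_koebe_mul {U : Set ℂ} (hU : U ∈ 𝓝 1) {f : ℂ → ℂ}
    (hf : DifferentiableOn ℂ f U) (hf1 : f 1 = 0) (hinv : ∀ x, f x⁻¹ = f x) :
    ∃ g : ℂ → ℂ, DifferentiableOn ℂ g U ∧ ∀ x ≠ 1, g x = koebe x * f x := by
  refine ⟨fun x ↦ x * dslope (dslope f 1) 1 x, differentiableOn_id.mul ?_, fun x hx ↦ ?_⟩
  · rwa [Complex.differentiableOn_dslope hU, Complex.differentiableOn_dslope hU]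
  · beta_reduce
    rw [dslope_of_ne _ hx, slope_def_field, dslope_same, deriv_one_eq_zero_of_comp_inv hinv,
      dslope_of_ne _ hx, slope_def_field, hf1, sub_zero, sub_zero, div_div, ← sq, koebe,
      ← neg_sub 1 x, neg_sq]
    ring

end koebe

/-- The one-sided series `∑_{n ≥ 0} x pⁿ / (1 - x pⁿ)²`. -/
noncomputable def koebeSum (p x : ℂ) : ℂ := ∑' n : ℕ, koebe (x * p ^ n)

/-- The two-sided series `E(x) = ∑_{n ∈ ℤ} x pⁿ / (1 - x pⁿ)²`, the multiplicative form of the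
Weierstrass function `℘` up to an additive constant. -/
noncomputable def bilateralKoebeSum (p x : ℂ) : ℂ := ∑' n : ℤ, koebe (x * p ^ n)

section koebeSum

variable {p x : ℂ}

lemma norm_koebe_mul_pow_le {r : ℝ} (hp : ‖p‖ < 1) (hr : r < 1) (hx : ‖x‖ ≤ r) (n : ℕ) :
    ‖koebe (x * p ^ n)‖ ≤ r / (1 - r) ^ 2 * ‖p‖ ^ n := by
  have hle : ‖x * p ^ n‖ ≤ r * ‖p‖ ^ n := by
    rw [norm_mul, norm_pow]
    gcongr
  have hle' : r * ‖p‖ ^ n ≤ r :=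
    mul_le_of_le_one_right ((norm_nonneg x).trans hx) (pow_le_one₀ (norm_nonneg _) hp.le)
  calc ‖koebe (x * p ^ n)‖ ≤ ‖x * p ^ n‖ / (1 - r) ^ 2 := norm_koebe_le hr (hle.trans hle')
    _ ≤ r * ‖p‖ ^ n / (1 - r) ^ 2 := by gcongr
    _ = r / (1 - r) ^ 2 * ‖p‖ ^ n := by ring

lemma summable_koebe_mul_pow (hp : ‖p‖ < 1) (x : ℂ) : Summable fun n : ℕ ↦ koebe (x * p ^ n) := by
  have hkoebe : koebe =O[𝓝 0] fun u ↦ u := by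
    simpa only [koebe_zero, sub_zero] using (differentiableAt_koebe zero_ne_one).isBigO_sub
  have hlim : Tendsto (fun n : ℕ ↦ x * p ^ n) atTop (𝓝 0) := by
    simpa using (tendsto_pow_atTop_nhds_zero_of_norm_lt_one hp).const_mul x
  refine summable_of_isBigO_nat (summable_geometric_of_lt_one (norm_nonneg p) hp)
    ((hkoebe.comp_tendsto hlim).trans (.of_norm_left ?_))
  simpa using Asymptotics.isBigO_const_mul_self ‖x‖ (fun n : ℕ ↦ ‖p‖ ^ n) atTop

lemma koebeSum_eq_koebe_add (hp : ‖p‖ < 1) (x : ℂ) :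
    koebeSum p x = koebe x + koebeSum p (p * x) := by
  have hshift (n : ℕ) : x * p ^ (n + 1) = p * x * p ^ n := by ring
  rw [koebeSum, (summable_koebe_mul_pow hp x).tsum_eq_zero_add]
  simp only [pow_zero, mul_one, hshift, koebeSum]

lemma differentiableOn_koebeSum (hp : ‖p‖ < 1) : DifferentiableOn ℂ (koebeSum p) (ball 0 1) := by
  intro x hx
  obtain ⟨r, hxr, hr⟩ := exists_between (mem_ball_zero_iff.mp hx)
  have hdiff : DifferentiableOn ℂ (koebeSum p) (ball 0 r) := by
    refine Complex.differentiableOn_tsum_of_summable_norm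
      ((summable_geometric_of_lt_one (norm_nonneg p) hp).mul_left (r / (1 - r) ^ 2))
      (fun n z hz ↦ ?_) isOpen_ball
      fun n z hz ↦ norm_koebe_mul_pow_le hp hr (mem_ball_zero_iff.mp hz).le n
    have hne := ne_one_of_norm_lt_one
      (norm_mul_pow_lt_one hp ((mem_ball_zero_iff.mp hz).trans hr) n)
    exact ((differentiableAt_koebe hne).comp z
      (differentiableAt_id.mul_const (p ^ n))).differentiableWithinAt
  exact (hdiff.differentiableAt
    (isOpen_ball.mem_nhds (mem_ball_zero_iff.mpr hxr))).differentiableWithinAt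

lemma summable_mul_koebe_pow (hp : ‖p‖ < 1) {N : ℕ} [NeZero N] (χ : ZMod N → ℂ) :
    Summable fun n : ℕ ↦ χ n * koebe (p ^ n) := by
  have hkoebe : Summable fun n : ℕ ↦ koebe (p ^ n) := by
    simpa using summable_koebe_mul_pow hp 1
  refine .of_norm_bounded (hkoebe.norm.mul_left (∑ j, ‖χ j‖)) fun n ↦ ?_
  rw [norm_mul]
  gcongr
  exact Finset.single_le_sum (fun j _ ↦ norm_nonneg (χ j)) (Finset.mem_univ (n : ZMod N))

lemma tsum_mul_koebe_pow (hp : ‖p‖ < 1) {N : ℕ} [NeZero N] (χ : ZMod N → ℂ) :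
    ∑' n : ℕ, χ n * koebe (p ^ n) = ∑ j : ZMod N, χ j * koebeSum (p ^ N) (p ^ j.val) := by
  rw [Nat.sumByResidueClasses (summable_mul_koebe_pow hp χ) N]
  simp [koebeSum, pow_add, pow_mul, tsum_mul_left]

lemma bilateralKoebeSum_mul_left (hp0 : p ≠ 0) (x : ℂ) :
    bilateralKoebeSum p (p * x) = bilateralKoebeSum p x := by
  rw [bilateralKoebeSum, bilateralKoebeSum,
    ← (Equiv.addRight (1 : ℤ)).tsum_eq fun n ↦ koebe (x * p ^ n)]
  simp only [Equiv.coe_addRight, zpow_add_one₀ hp0, mul_left_comm x, mul_assoc, mul_comm p]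

lemma bilateralKoebeSum_eq_add (hp : ‖p‖ < 1) (x : ℂ) :
    bilateralKoebeSum p x = koebeSum p x + koebeSum p (p / x) := by
  have hneg (n : ℕ) : koebe (x * p ^ (-(n + 1 : ℤ))) = koebe (p / x * p ^ n) := by
    rw [← koebe_inv (p / x * p ^ n), mul_inv, inv_div, zpow_neg, ← Nat.cast_succ, zpow_natCast,
      pow_succ', mul_inv]
    ring_nf
  rw [bilateralKoebeSum, tsum_of_nat_of_neg_add_one]
  · simp only [zpow_natCast, hneg, koebeSum]
  · simpa only [zpow_natCast] using summable_koebe_mul_pow hp x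
  · simpa only [hneg] using summable_koebe_mul_pow hp (p / x)

end koebeSum

/-- The theta function `θ(x) = (x; p)_∞ (p / x; p)_∞`. -/
noncomputable def qTheta (p x : ℂ) : ℂ := qPoch p x * qPoch p (p / x)

/-- The theta function with its zero at `1` divided out: `θ(x) / (1 - x)`. -/
noncomputable def qThetaCofactor (p x : ℂ) : ℂ := qPoch p (p * x) * qPoch p (p / x)

section qTheta

variable {p x : ℂ}

lemma qTheta_eq_one_sub_mul_cofactor (hp : ‖p‖ < 1) (x : ℂ) :
    qTheta p x = (1 - x) * qThetaCofactor p x := by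
  rw [qTheta, qThetaCofactor, qPoch_eq_one_sub_mul hp x, mul_assoc]

lemma qTheta_one (hp : ‖p‖ < 1) : qTheta p 1 = 0 := by
  simp [qTheta_eq_one_sub_mul_cofactor hp]

lemma qTheta_div (hp0 : p ≠ 0) (x : ℂ) : qTheta p (p / x) = qTheta p x := by
  rw [qTheta, qTheta, div_div_cancel₀ hp0, mul_comm]

lemma qTheta_mul_left (hp0 : p ≠ 0) (hp : ‖p‖ < 1) (hx : x ≠ 0) :
    qTheta p (p * x) = -qTheta p x / x := by
  rw [qTheta, qTheta, div_mul_cancel_left₀ hp0, qPoch_eq_one_sub_mul hp x,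
    qPoch_eq_one_sub_mul hp x⁻¹, ← div_eq_mul_inv]
  field_simp
  ring

lemma differentiableAt_qTheta (hp : ‖p‖ < 1) (hx : x ≠ 0) : DifferentiableAt ℂ (qTheta p) x :=
  (differentiable_qPoch hp x).mul
    ((differentiable_qPoch hp _).comp x ((differentiableAt_const p).div differentiableAt_id hx))

lemma qThetaCofactor_inv (p x : ℂ) : qThetaCofactor p x⁻¹ = qThetaCofactor p x := by
  rw [qThetaCofactor, qThetaCofactor, div_inv_eq_mul, ← div_eq_mul_inv, mul_comm]

lemma qThetaCofactor_one (p : ℂ) : qThetaCofactor p 1 = qPoch p p ^ 2 := by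
  rw [qThetaCofactor, mul_one, div_one, sq]

lemma qThetaCofactor_ne_zero (hp : ‖p‖ < 1) (hx : x ∈ periodAnnulus p) :
    qThetaCofactor p x ≠ 0 :=
  mul_ne_zero (qPoch_ne_zero hp hx.2) (qPoch_ne_zero hp (norm_div_lt_one_of_mem_periodAnnulus hx))

lemma qTheta_ne_zero (hp : ‖p‖ < 1) (hx : x ∈ periodAnnulus p) (hx1 : x ≠ 1) :
    qTheta p x ≠ 0 := by
  rw [qTheta_eq_one_sub_mul_cofactor hp]
  exact mul_ne_zero (sub_ne_zero.mpr hx1.symm) (qThetaCofactor_ne_zero hp hx)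

lemma differentiableAt_qThetaCofactor (hp : ‖p‖ < 1) (hx : x ≠ 0) :
    DifferentiableAt ℂ (qThetaCofactor p) x :=
  ((differentiable_qPoch hp _).comp x (differentiableAt_id.const_mul p)).mul
    ((differentiable_qPoch hp _).comp x ((differentiableAt_const p).div differentiableAt_id hx))

end qTheta

/-- The elliptic function `x θ(x y) θ(y / x) / (θ(x)² θ(y)²)` of `x`, the multiplicative form of
`-σ(x + y) σ(x - y) / (σ(x)² σ(y)²)`. -/
noncomputable def thetaQuotient (p y x : ℂ) : ℂ :=
  x * qTheta p (x * y) * qTheta p (y / x) / (qTheta p x ^ 2 * qTheta p y ^ 2)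

/-- The theta quotient with its double pole `x / (1 - x)²` divided out. -/
noncomputable def thetaQuotientCofactor (p y x : ℂ) : ℂ :=
  qTheta p (x * y) * qTheta p (y / x) / (qThetaCofactor p x ^ 2 * qTheta p y ^ 2)

section thetaQuotient

variable {p x y : ℂ}

lemma thetaQuotient_mul_left (hp0 : p ≠ 0) (hp : ‖p‖ < 1) (hx : x ≠ 0) (hy : y ≠ 0) :
    thetaQuotient p y (p * x) = thetaQuotient p y x := by
  have hdiv : qTheta p (y / x) = -qTheta p (y / (p * x)) / (y / (p * x)) := by
    rw [← qTheta_mul_left hp0 hp (by positivity), ← mul_div_assoc, mul_div_mul_left _ _ hp0]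
  rw [thetaQuotient, thetaQuotient, hdiv, mul_assoc p x y,
    qTheta_mul_left hp0 hp (mul_ne_zero hx hy), qTheta_mul_left hp0 hp hx]
  field_simp

lemma thetaQuotient_self (hp : ‖p‖ < 1) (hy : y ≠ 0) : thetaQuotient p y y = 0 := by
  simp [thetaQuotient, div_self hy, qTheta_one hp]

lemma thetaQuotient_eq_koebe_mul_cofactor (hp : ‖p‖ < 1) (y x : ℂ) :
    thetaQuotient p y x = koebe x * thetaQuotientCofactor p y x := by
  rw [thetaQuotient, thetaQuotientCofactor, koebe, qTheta_eq_one_sub_mul_cofactor hp x,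
    mul_pow, mul_assoc, mul_assoc, div_mul_div_comm]

lemma thetaQuotientCofactor_inv (p y x : ℂ) :
    thetaQuotientCofactor p y x⁻¹ = thetaQuotientCofactor p y x := by
  rw [thetaQuotientCofactor, thetaQuotientCofactor, qThetaCofactor_inv, div_inv_eq_mul,
    inv_mul_eq_div, mul_comm y x, mul_comm (qTheta p (y / x))]

lemma thetaQuotientCofactor_one (hy : qTheta p y ≠ 0) :
    thetaQuotientCofactor p y 1 = (qPoch p p ^ 4)⁻¹ := by
  rw [thetaQuotientCofactor, one_mul, div_one, qThetaCofactor_one]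
  field_simp

lemma differentiableOn_thetaQuotientCofactor (hp : ‖p‖ < 1) (hy : y ∈ periodAnnulus p)
    (hy1 : y ≠ 1) : DifferentiableOn ℂ (thetaQuotientCofactor p y) (periodAnnulus p) := by
  intro x hx
  have hx0 := ne_zero_of_mem_periodAnnulus hx
  have hy0 := ne_zero_of_mem_periodAnnulus hy
  have hmul : DifferentiableAt ℂ (fun z ↦ qTheta p (z * y)) x :=
    (differentiableAt_qTheta hp (mul_ne_zero hx0 hy0)).comp x (differentiableAt_id.mul_const y)
  have hdiv : DifferentiableAt ℂ (fun z ↦ qTheta p (y / z)) x :=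
    (differentiableAt_qTheta hp (div_ne_zero hy0 hx0)).comp x
      ((differentiableAt_const y).div differentiableAt_id hx0)
  have hden : qThetaCofactor p x ^ 2 * qTheta p y ^ 2 ≠ 0 :=
    mul_ne_zero (pow_ne_zero 2 (qThetaCofactor_ne_zero hp hx))
      (pow_ne_zero 2 (qTheta_ne_zero hp hy hy1))
  exact ((hmul.mul hdiv).div (((differentiableAt_qThetaCofactor hp hx0).pow 2).mul_const _)
    hden).differentiableWithinAt

end thetaQuotient

section AdditionFormula

variable {p x y : ℂ}

lemma exists_differentiableOn_eq_bilateralKoebeSum_sub (hp : ‖p‖ < 1) (hy : y ∈ periodAnnulus p)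
    (hy1 : y ≠ 1) :
    ∃ f : ℂ → ℂ, DifferentiableOn ℂ f (periodAnnulus p) ∧
      ∀ x ≠ 1, f x = bilateralKoebeSum p x - qPoch p p ^ 4 * thetaQuotient p y x := by
  have hpole : 1 - qPoch p p ^ 4 * thetaQuotientCofactor p y 1 = 0 := by
    rw [thetaQuotientCofactor_one (qTheta_ne_zero hp hy hy1),
      mul_inv_cancel₀ (pow_ne_zero 4 (qPoch_ne_zero hp hp)), sub_self]
  obtain ⟨g, hg, hg_eq⟩ := exists_differentiableOn_eq_koebe_mul
    (f := fun x ↦ 1 - qPoch p p ^ 4 * thetaQuotientCofactor p y x)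
    ((isOpen_periodAnnulus p).mem_nhds (one_mem_periodAnnulus hp))
    (((differentiableOn_thetaQuotientCofactor hp hy hy1).const_mul _).const_sub 1) hpole
    (fun x ↦ by rw [thetaQuotientCofactor_inv])
  have hmul : DifferentiableOn ℂ (fun x ↦ koebeSum p (p * x)) (periodAnnulus p) :=
    (differentiableOn_koebeSum hp).comp (by fun_prop) fun x hx ↦ mem_ball_zero_iff.mpr hx.2
  have hdiv : DifferentiableOn ℂ (fun x ↦ koebeSum p (p / x)) (periodAnnulus p) :=
    (differentiableOn_koebeSum hp).comp
      ((differentiableOn_const p).div differentiableOn_id fun x ↦ ne_zero_of_mem_periodAnnulus)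
      fun x hx ↦ mem_ball_zero_iff.mpr (norm_div_lt_one_of_mem_periodAnnulus hx)
  refine ⟨_, (hg.add hmul).add hdiv, fun x hx ↦ ?_⟩
  rw [bilateralKoebeSum_eq_add hp, koebeSum_eq_koebe_add hp, thetaQuotient_eq_koebe_mul_cofactor hp]
  simp only [Pi.add_apply, hg_eq x hx]
  ring

theorem bilateralKoebeSum_sub_bilateralKoebeSum (hp0 : p ≠ 0) (hp : ‖p‖ < 1)
    (hx : x ∈ periodAnnulus p) (hx1 : x ≠ 1) (hy : y ∈ periodAnnulus p) (hy1 : y ≠ 1) :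
    bilateralKoebeSum p x - bilateralKoebeSum p y = qPoch p p ^ 4 * thetaQuotient p y x := by
  have hy0 := ne_zero_of_mem_periodAnnulus hy
  obtain ⟨f, hf, hf_eq⟩ := exists_differentiableOn_eq_bilateralKoebeSum_sub hp hy hy1
  have hper : ∀ z ∈ periodAnnulus p, p * z ∈ periodAnnulus p → f (p * z) = f z := by
    intro z hz hpz
    have hz1 : z ≠ 1 := by
      rintro rfl
      simpa using hpz.1
    have hpz1 : p * z ≠ 1 := fun h ↦ by simpa [h] using hz.2
    rw [hf_eq _ hpz1, hf_eq _ hz1, bilateralKoebeSum_mul_left hp0,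
      thetaQuotient_mul_left hp0 hp (ne_zero_of_mem_periodAnnulus hz) hy0]
  have hconst := eq_of_differentiableOn_of_mul_periodic hp0 hp hf hper hx hy
  rw [hf_eq x hx1, hf_eq y hy1, thetaQuotient_self hp hy0] at hconst
  linear_combination hconst

end AdditionFormula

section ModFive

variable {q : ℂ}

@[to_additive]
lemma prod_zmod_five {M : Type*} [CommMonoid M] (f : ZMod 5 → M) :
    ∏ j, f j = f 0 * f 1 * f 2 * f 3 * f 4 :=
  Fin.prod_univ_five f

lemma qPoch_self_eq_qTheta_mul (hq0 : q ≠ 0) (hq : ‖q‖ < 1) :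
    qPoch q q = qTheta (q ^ 5) q * qTheta (q ^ 5) (q ^ 2) * qPoch (q ^ 5) (q ^ 5) := by
  have hdiv1 : q ^ 5 / q = q ^ 4 := by field_simp
  have hdiv2 : q ^ 5 / q ^ 2 = q ^ 3 := by field_simp
  rw [qPoch_eq_prod_zmod hq q 5, prod_zmod_five, qTheta, qTheta, hdiv1, hdiv2]
  simp only [← pow_succ', ← sq, ZMod.val_zero, ZMod.val_one, ZMod.val_ofNat, Nat.reduceMod,
    Nat.reduceAdd, pow_one]
  ring

lemma tsum_legendreSym_five (hq0 : q ≠ 0) (hq : ‖q‖ < 1) :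
    ∑' n : ℕ, (legendreSym 5 ((n : ℤ) + 1) : ℂ) * q ^ (n + 1) / (1 - q ^ (n + 1)) ^ 2 =
      bilateralKoebeSum (q ^ 5) q - bilateralKoebeSum (q ^ 5) (q ^ 2) := by
  have hp : ‖q ^ 5‖ < 1 := norm_pow_lt_one hq (by norm_num)
  let χ : ZMod 5 → ℂ := fun j ↦ quadraticChar (ZMod 5) j
  have hdiv1 : q ^ 5 / q = q ^ 4 := by field_simp
  have hdiv2 : q ^ 5 / q ^ 2 = q ^ 3 := by field_simp
  have hχ0 : quadraticChar (ZMod 5) 0 = 0 := by decide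
  have hχ1 : quadraticChar (ZMod 5) 1 = 1 := by decide
  have hχ2 : quadraticChar (ZMod 5) 2 = -1 := by decide
  have hχ3 : quadraticChar (ZMod 5) 3 = -1 := by decide
  have hχ4 : quadraticChar (ZMod 5) 4 = 1 := by decide
  calc ∑' n : ℕ, (legendreSym 5 ((n : ℤ) + 1) : ℂ) * q ^ (n + 1) / (1 - q ^ (n + 1)) ^ 2
      = ∑' n : ℕ, χ n * koebe (q ^ n) := by
        rw [(summable_mul_koebe_pow hq χ).tsum_eq_zero_add]
        simp [χ, legendreSym, koebe, mul_div_assoc]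
    _ = ∑ j : ZMod 5, χ j * koebeSum (q ^ 5) (q ^ j.val) := tsum_mul_koebe_pow hq χ
    _ = koebeSum (q ^ 5) q - koebeSum (q ^ 5) (q ^ 2) - koebeSum (q ^ 5) (q ^ 3) +
          koebeSum (q ^ 5) (q ^ 4) := by
        simp only [sum_zmod_five, χ, hχ0, hχ1, hχ2, hχ3, hχ4, ZMod.val_one, ZMod.val_ofNat,
          Nat.reduceMod, pow_one]
        push_cast
        ring
    _ = bilateralKoebeSum (q ^ 5) q - bilateralKoebeSum (q ^ 5) (q ^ 2) := by
        rw [bilateralKoebeSum_eq_add hp, bilateralKoebeSum_eq_add hp, hdiv1, hdiv2]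
        ring

lemma thetaQuotient_pow_five_self (hq0 : q ≠ 0) :
    thetaQuotient (q ^ 5) (q ^ 2) q = q / (qTheta (q ^ 5) q * qTheta (q ^ 5) (q ^ 2)) := by
  have hmul : qTheta (q ^ 5) (q * q ^ 2) = qTheta (q ^ 5) (q ^ 2) := by
    rw [← qTheta_div (pow_ne_zero 5 hq0) (q ^ 2)]
    congr 1
    field_simp
  have hdiv : q ^ 2 / q = q := by field_simp
  rw [thetaQuotient, hmul, hdiv]
  field_simp

end ModFive

/-- Ramanujan's companion identity:
`∑_{n ≥ 1} (n/5) qⁿ/(1-qⁿ)² = q (q⁵;q⁵)_∞⁵ / (q;q)_∞` for `|q| < 1`. -/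
theorem ramanujan_lost_notebook_mod5' (q : ℂ) (hq : ‖q‖ < 1) :
    ∑' n : ℕ, (legendreSym 5 ((n : ℤ) + 1) : ℂ) * q ^ (n + 1) / (1 - q ^ (n + 1)) ^ 2
      = q * (∏' n : ℕ, (1 - (q ^ 5) ^ (n + 1))) ^ 5 / ∏' n : ℕ, (1 - q ^ (n + 1)) := by
  rcases eq_or_ne q 0 with rfl | hq0
  · simp
  have hp : ‖q ^ 5‖ < 1 := norm_pow_lt_one hq (by norm_num)
  have hpoch : qPoch (q ^ 5) (q ^ 5) ≠ 0 := qPoch_ne_zero hp hp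
  have hmem : q ∈ periodAnnulus (q ^ 5) := by
    simpa using pow_mem_periodAnnulus_pow hq0 hq (show 1 < 5 by norm_num)
  have hmem2 := pow_mem_periodAnnulus_pow hq0 hq (show 2 < 5 by norm_num)
  rw [tsum_legendreSym_five hq0 hq,
    bilateralKoebeSum_sub_bilateralKoebeSum (pow_ne_zero 5 hq0) hp hmem (ne_one_of_norm_lt_one hq)
      hmem2 (ne_one_of_norm_lt_one (norm_pow_lt_one hq two_ne_zero)),
    thetaQuotient_pow_five_self hq0, tprod_one_sub_pow_succ, tprod_one_sub_pow_succ,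
    qPoch_self_eq_qTheta_mul hq0 hq]
  field_simp
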